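/- arXiv:2602.06361 — 2 statements merged into one kernel-verified Lean document; each statement's English description precedes it below -/
import Mathlib

section
/- Let m be divisible by 4, let δ ∈ (0,1), Δ ∈ (0,m), and γ ∈ (0, 1/2] satisfy 2√(log(2/δ)·m) ≤ m/2 and 4(Δ+1)/m ≤ 1/2, and set ε = 2(Δ+1)/(m − 2√(log(2/δ)·m)). Consider the hard instance with parameters ε and γ, where the latent variables X_1,…,X_m are i.i.d. Bernoulli(1/2). Then with probability at least 1 − δ over X, the resulting utility profiles satisfy OptEnvy ≤ −Δ. -/
open Real
open scoped Classical

noncomputable section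

def envyAB {m : ℕ} (μa : Fin m → ℝ) (A : Finset (Fin m)) : ℝ :=
  ∑ i ∈ Aᶜ, μa i - ∑ i ∈ A, μa i

def envyBA {m : ℕ} (μb : Fin m → ℝ) (A : Finset (Fin m)) : ℝ :=
  ∑ i ∈ A, μb i - ∑ i ∈ Aᶜ, μb i

def envy {m : ℕ} (μa μb : Fin m → ℝ) (A : Finset (Fin m)) : ℝ :=
  max (envyAB μa A) (envyBA μb A)

def optEnvy {m : ℕ} (μa μb : Fin m → ℝ) : ℝ :=
  ⨅ A : Finset (Fin m), envy μa μb A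

/-- The hard instance's utilities for agent a, given parameters `ε, γ` and latent variables
`X` (items are indexed from `0`, so the "first half" is `i < m/2`): for `i < m/2`,
`μ^a_i = 1/2 + ε` if `X_i = 1` and `1/2 − ε` otherwise; for `i ≥ m/2`,
`μ^a_i = 1/2 + γ` if `X_i = 1` and `1/2 − γ` otherwise. -/
def hardμa (m : ℕ) (ε γ : ℝ) (X : Fin m → Bool) (i : Fin m) : ℝ :=
  if (i : ℕ) < m / 2 then (if X i then 1 / 2 + ε else 1 / 2 - ε)
  else (if X i then 1 / 2 + γ else 1 / 2 - γ)

/-- The hard instance's utilities for agent b: for `i < m/2`, `μ^b_i = 1/2 − ε` if `X_i = 1`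
and `1/2 + ε` otherwise; for `i ≥ m/2`, `μ^b_i = μ^a_i`. -/
def hardμb (m : ℕ) (ε γ : ℝ) (X : Fin m → Bool) (i : Fin m) : ℝ :=
  if (i : ℕ) < m / 2 then (if X i then 1 / 2 - ε else 1 / 2 + ε)
  else (if X i then 1 / 2 + γ else 1 / 2 - γ)

def sgn18 (b : Bool) : ℝ := if b then 1 else -1

def dev18 (m : ℕ) (X : Fin m → Bool) : ℝ :=
  ∑ i : Fin m, if (i : ℕ) < m / 2 then sgn18 (X i) else 0

lemma card_half18 (m : ℕ) :
    (Finset.univ.filter fun i : Fin m => (i : ℕ) < m / 2).card = m / 2 := by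
  have h := Fin.card_filter_val_lt (n := m) (m := m / 2)
  rw [min_eq_right (Nat.div_le_self m 2)] at h
  convert h

lemma mgf18 (m : ℕ) (t : ℝ) :
    ∑ X : Fin m → Bool, Real.exp (t * dev18 m X)
      ≤ 2 ^ m * Real.exp ((m / 2 : ℕ) * (t ^ 2 / 2)) := by
  have e1 : ∀ X : Fin m → Bool, Real.exp (t * dev18 m X)
      = ∏ i : Fin m, Real.exp (if (i : ℕ) < m / 2 then t * sgn18 (X i) else 0) := by
    intro X
    rw [← Real.exp_sum, dev18, Finset.mul_sum]
    congr 1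
    apply Finset.sum_congr rfl
    intro i _
    split_ifs <;> simp
  have e2 : ∑ X : Fin m → Bool, Real.exp (t * dev18 m X)
      = ∏ i : Fin m, ∑ b : Bool, Real.exp (if (i : ℕ) < m / 2 then t * sgn18 b else 0) := by
    rw [Finset.sum_congr rfl (fun X _ => e1 X)]
    rw [Finset.prod_univ_sum, Fintype.piFinset_univ]
  rw [e2]
  have e3 : (2 : ℝ) ^ m * Real.exp ((m / 2 : ℕ) * (t ^ 2 / 2))
      = ∏ i : Fin m, (2 * Real.exp (if (i : ℕ) < m / 2 then t ^ 2 / 2 else 0)) := by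
    rw [Finset.prod_mul_distrib, ← Real.exp_sum, ← Finset.sum_filter, Finset.sum_const,
      card_half18]
    simp
  rw [e3]
  apply Finset.prod_le_prod
  · intro i _
    positivity
  · intro i _
    by_cases hi : (i : ℕ) < m / 2
    · have := Real.cosh_le_exp_half_sq t
      rw [Real.cosh_eq] at this
      simp [hi, sgn18]
      linarith
    · simp [hi]

lemma tail18 (m : ℕ) (t s : ℝ) (bad : Finset (Fin m → Bool))
    (hb : ∀ X ∈ bad, s ≤ t * dev18 m X) :
    (bad.card : ℝ) * Real.exp s ≤ 2 ^ m * Real.exp ((m / 2 : ℕ) * (t ^ 2 / 2)) := by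
  refine le_trans ?_ (mgf18 m t)
  calc (bad.card : ℝ) * Real.exp s = ∑ X ∈ bad, Real.exp s := by simp
    _ ≤ ∑ X ∈ bad, Real.exp (t * dev18 m X) :=
        Finset.sum_le_sum fun X hX => Real.exp_le_exp.2 (hb X hX)
    _ ≤ _ := Finset.sum_le_sum_of_subset_of_nonneg (Finset.subset_univ _)
        fun _ _ _ => (Real.exp_pos _).le

lemma balance18 {ι : Type*} [DecidableEq ι] (G : Finset ι) (v : ι → ℝ)
    (hv : ∀ i, 0 ≤ v i ∧ v i ≤ 1) :
    ∃ B ⊆ G, |∑ i ∈ G, (if i ∈ B then -1 else 1) * v i| ≤ 1 := by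
  induction G using Finset.induction_on with
  | empty => exact ⟨∅, by simp, by simp⟩
  | insert a G ha ih =>
    obtain ⟨B, hB, h⟩ := ih
    have haB : a ∉ B := fun h => ha (hB h)
    obtain ⟨h0, h1⟩ := hv a
    rw [abs_le] at h
    rcases le_total (∑ i ∈ G, (if i ∈ B then -1 else 1) * v i) 0 with hs | hs
    · refine ⟨B, hB.trans (Finset.subset_insert _ _), ?_⟩
      rw [Finset.sum_insert ha, if_neg haB, abs_le]
      constructor <;> linarith
    · refine ⟨insert a B, Finset.insert_subset_insert _ hB, ?_⟩
      have : ∑ i ∈ G, (if i ∈ insert a B then (-1:ℝ) else 1) * v i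
          = ∑ i ∈ G, (if i ∈ B then -1 else 1) * v i := by
        apply Finset.sum_congr rfl
        intro i hi
        have : i ≠ a := fun h => ha (h ▸ hi)
        simp [this]
      rw [Finset.sum_insert ha, this, if_pos (Finset.mem_insert_self _ _), abs_le]
      constructor <;> linarith

lemma envyAB18 {m : ℕ} (μ : Fin m → ℝ) (A : Finset (Fin m)) :
    envyAB μ A = ∑ i, (if i ∈ A then -1 else 1) * μ i := by
  rw [envyAB, ← Finset.sum_compl_add_sum A, sub_eq_add_neg, ← Finset.sum_neg_distrib]
  congr 1
  · exact Finset.sum_congr rfl fun i hi => by simp [Finset.mem_compl.1 hi]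
  · exact Finset.sum_congr rfl fun i hi => by simp [hi]

lemma envyBA18 {m : ℕ} (μ : Fin m → ℝ) (A : Finset (Fin m)) :
    envyBA μ A = - ∑ i, (if i ∈ A then -1 else 1) * μ i := by
  rw [← envyAB18, envyAB, envyBA]; ring

lemma det18 (m : ℕ) (hm : 4 ∣ m) (ε γ : ℝ) (hε : 0 ≤ ε) (hγ : γ ∈ Set.Ioc (0 : ℝ) (1 / 2))
    (X : Fin m → Bool) :
    optEnvy (hardμa m ε γ X) (hardμb m ε γ X) ≤ -(m / 2 - |dev18 m X|) * ε + 1 := by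
  set F := Finset.univ.filter fun i : Fin m => (i : ℕ) < m / 2 with hF
  have hFc : F.card = m / 2 := card_half18 m
  set K := F.filter fun i => X i = true with hK
  have hKF : K ⊆ F := Finset.filter_subset _ _
  have hm2 : ((m / 2 : ℕ) : ℝ) = m / 2 := by
    obtain ⟨k, rfl⟩ := hm
    rw [show 4 * k / 2 = 2 * k by omega]; push_cast; ring
  have hm4 : ((m / 4 : ℕ) : ℝ) = m / 4 := by
    obtain ⟨k, rfl⟩ := hm
    rw [show 4 * k / 4 = k by omega]; push_cast; ring
  have ind : ∀ T ⊆ F, ∑ i ∈ F, (if i ∈ T then (1:ℝ) else 0) = T.card := by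
    intro T hT
    rw [Finset.sum_ite_mem, Finset.inter_eq_right.2 hT]; simp
  have hdev : dev18 m X = 2 * K.card - m / 2 := by
    rw [dev18, ← Finset.sum_filter, ← hF, ← ind K hKF, ← hm2, ← hFc, Finset.mul_sum]
    rw [Finset.card_eq_sum_ones, Nat.cast_sum, ← Finset.sum_sub_distrib]
    apply Finset.sum_congr rfl
    intro i hi
    by_cases h : X i = true <;> simp [hK, hi, h, sgn18]
    norm_num
  -- choose S
  obtain ⟨S, hSF, hSc, hmis⟩ : ∃ S ⊆ F, S.card = m / 4 ∧
      ∑ i ∈ F, (if i ∈ S then (-1:ℝ) else 1) * sgn18 (X i) ≤ -(m / 2 - |dev18 m X|) := by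
    have hconv : ∀ S : Finset (Fin m), ∀ i ∈ F, (if i ∈ S then (-1:ℝ) else 1) * sgn18 (X i)
        = -1 + (if i ∈ S then (if i ∈ K then (0:ℝ) else 2) else (if i ∈ K then 2 else 0)) := by
      intro S i hi
      by_cases h : X i = true <;> by_cases h' : i ∈ S <;> simp [hK, hi, h, h', sgn18] <;> norm_num
    have hF1 : ∑ i ∈ F, (-1:ℝ) = -(m/2) := by
      rw [Finset.sum_const, hFc, nsmul_eq_mul, hm2]; ring
    rcases le_total (m / 4) K.card with h | h
    · obtain ⟨S, hS, hc⟩ := Finset.exists_subset_card_eq h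
      refine ⟨S, hS.trans hKF, hc, ?_⟩
      have : ∑ i ∈ F, (if i ∈ S then (-1:ℝ) else 1) * sgn18 (X i)
          = ∑ i ∈ F, (-1 + (2 * (if i ∈ K then (1:ℝ) else 0) - 2 * (if i ∈ S then 1 else 0))) := by
        apply Finset.sum_congr rfl
        intro i hi
        rw [hconv S i hi]
        by_cases h1 : i ∈ S
        · simp [h1, hS h1]
        · by_cases h2 : i ∈ K <;> simp [h1, h2]
      rw [this, Finset.sum_add_distrib, Finset.sum_sub_distrib, ← Finset.mul_sum,
        ← Finset.mul_sum, ind K hKF, ind S (hS.trans hKF), hF1, hc, hm4]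
      have := le_abs_self (dev18 m X)
      linarith
    · obtain ⟨S, hKS, hS, hc⟩ := Finset.exists_subsuperset_card_eq hKF h (by omega)
      refine ⟨S, hS, hc, ?_⟩
      have : ∑ i ∈ F, (if i ∈ S then (-1:ℝ) else 1) * sgn18 (X i)
          = ∑ i ∈ F, (-1 + (2 * (if i ∈ S then (1:ℝ) else 0) - 2 * (if i ∈ K then 1 else 0))) := by
        apply Finset.sum_congr rfl
        intro i hi
        rw [hconv S i hi]
        by_cases h1 : i ∈ K
        · simp [h1, hKS h1]
        · by_cases h2 : i ∈ S <;> simp [h1, h2]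
      rw [this, Finset.sum_add_distrib, Finset.sum_sub_distrib, ← Finset.mul_sum,
        ← Finset.mul_sum, ind K hKF, ind S hS, hF1, hc, hm4]
      have := neg_le_abs (dev18 m X)
      linarith
  have hσ : ∑ i ∈ F, (if i ∈ S then (-1:ℝ) else 1) = 0 := by
    have : ∑ i ∈ F, (if i ∈ S then (-1:ℝ) else 1)
        = ∑ i ∈ F, (1 - 2 * (if i ∈ S then (1:ℝ) else 0)) := by
      apply Finset.sum_congr rfl
      intro i _
      split_ifs <;> norm_num
    rw [this, Finset.sum_sub_distrib, ← Finset.mul_sum, ind S hSF, hSc, hm4, Finset.sum_const,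
      hFc, nsmul_eq_mul, hm2]
    ring
  obtain ⟨B, hBG, hB⟩ := balance18 Fᶜ (fun i => if X i then 1 / 2 + γ else 1 / 2 - γ)
    (by intro i; have := hγ.1; have := hγ.2; split_ifs <;> constructor <;> linarith)
  rw [abs_le] at hB
  have hle : optEnvy (hardμa m ε γ X) (hardμb m ε γ X)
      ≤ envy (hardμa m ε γ X) (hardμb m ε γ X) (S ∪ B) :=
    ciInf_le (Set.finite_range _).bddBelow _
  refine hle.trans ?_
  have memF : ∀ i ∈ F, (i ∈ S ∪ B ↔ i ∈ S) := by
    intro i hi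
    have : i ∉ B := fun h => (Finset.mem_compl.1 (hBG h)) hi
    simp [this]
  have memG : ∀ i ∈ Fᶜ, (i ∈ S ∪ B ↔ i ∈ B) := by
    intro i hi
    have : i ∉ S := fun h => (Finset.mem_compl.1 hi) (hSF h)
    simp [this]
  have hmulε := mul_le_mul_of_nonneg_right hmis hε
  have split : ∀ (μ : Fin m → ℝ) (c : ℝ), (∀ i ∈ F, μ i = 1/2 + c * sgn18 (X i)) →
      (∀ i ∈ Fᶜ, μ i = if X i then 1 / 2 + γ else 1 / 2 - γ) →
      ∑ i, (if i ∈ S ∪ B then (-1:ℝ) else 1) * μ i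
        = (∑ i ∈ F, (if i ∈ S then (-1:ℝ) else 1) * sgn18 (X i)) * c
          + ∑ i ∈ Fᶜ, (if i ∈ B then -1 else 1) * (if X i then 1 / 2 + γ else 1 / 2 - γ) := by
    intro μ c h1 h2
    rw [← Finset.sum_add_sum_compl F]
    congr 1
    · have : ∑ i ∈ F, (if i ∈ S ∪ B then (-1:ℝ) else 1) * μ i
          = ∑ i ∈ F, ((1/2) * (if i ∈ S then (-1:ℝ) else 1)
            + ((if i ∈ S then (-1:ℝ) else 1) * sgn18 (X i)) * c) := by
        apply Finset.sum_congr rfl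
        intro i hi
        simp only [memF i hi, h1 i hi]
        ring
      rw [this, Finset.sum_add_distrib, ← Finset.mul_sum, hσ, ← Finset.sum_mul]
      ring
    · apply Finset.sum_congr rfl
      intro i hi
      simp only [memG i hi, h2 i hi]
  have sa := split (hardμa m ε γ X) ε
    (by
      intro i hi
      have hi' : (i : ℕ) < m / 2 := (Finset.mem_filter.1 hi).2
      by_cases h : X i = true <;> simp [hardμa, hi', h, sgn18]
      ring)
    (by
      intro i hi
      have hi' : ¬ (i : ℕ) < m / 2 := fun h => Finset.mem_compl.1 hi (by simp [hF, h])
      simp only [hardμa, hi', if_false])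
  have sb := split (hardμb m ε γ X) (-ε)
    (by
      intro i hi
      have hi' : (i : ℕ) < m / 2 := (Finset.mem_filter.1 hi).2
      by_cases h : X i = true <;> simp [hardμb, hi', h, sgn18]
      ring)
    (by
      intro i hi
      have hi' : ¬ (i : ℕ) < m / 2 := fun h => Finset.mem_compl.1 hi (by simp [hF, h])
      simp only [hardμb, hi', if_false])
  rw [envy, envyAB18, envyBA18, sa, sb]
  apply max_le <;> linarith [hB.1, hB.2]

/-- for the hard instance with i.i.d. `Bernoulli(1/2)` latent variables `X`
(all `2^m` values equally likely) and `ε = 2(Δ+1)/(m − 2√(log(2/δ) m))`, with probability at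
least `1 − δ` the instance satisfies `OptEnvy ≤ −Δ`. -/
theorem stmt18 (m : ℕ) (hm : 4 ∣ m) (δ Δ γ : ℝ)
    (hδ : δ ∈ Set.Ioo (0 : ℝ) 1) (hΔ : Δ ∈ Set.Ioo (0 : ℝ) (m : ℝ))
    (hγ : γ ∈ Set.Ioc (0 : ℝ) (1 / 2))
    (h1 : 2 * Real.sqrt (Real.log (2 / δ) * m) ≤ m / 2)
    (h2 : 4 * (Δ + 1) / m ≤ 1 / 2)
    (ε : ℝ) (hε : ε = 2 * (Δ + 1) / (m - 2 * Real.sqrt (Real.log (2 / δ) * m))) :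
    1 - δ ≤
      ((Finset.univ.filter fun X : Fin m → Bool =>
          optEnvy (hardμa m ε γ X) (hardμb m ε γ X) ≤ -Δ).card : ℝ) / 2 ^ m := by
  have hmpos : (0:ℝ) < m := hΔ.1.trans hΔ.2
  set s := Real.sqrt (Real.log (2 / δ) * m) with hs
  have hδ0 := hδ.1
  have hδ1 := hδ.2
  have hlog : 0 < Real.log (2 / δ) := Real.log_pos (by rw [lt_div_iff₀ hδ0]; linarith)
  have hs0 : 0 < s := Real.sqrt_pos.2 (by positivity)
  have hs2 : s ^ 2 = Real.log (2 / δ) * m := Real.sq_sqrt (by positivity)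
  have hden : 0 < m - 2 * s := by linarith
  have hε0 : 0 ≤ ε := by
    rw [hε]
    have := hΔ.1
    positivity
  have hεm : ε * (m - 2 * s) = 2 * (Δ + 1) := by rw [hε]; field_simp
  have hm2 : ((m / 2 : ℕ) : ℝ) = m / 2 := by
    obtain ⟨k, rfl⟩ := hm
    rw [show 4 * k / 2 = 2 * k by omega]; push_cast; ring
  have hexp : Real.exp (Real.log (2 / δ)) = 2 / δ := Real.exp_log (by positivity)
  -- one-sided tails
  have key : ∀ t : ℝ, t ^ 2 = (2 * s / m) ^ 2 → ∀ bad : Finset (Fin m → Bool),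
      (∀ X ∈ bad, 2 * s ^ 2 / m ≤ t * dev18 m X) → (bad.card : ℝ) ≤ δ / 2 * 2 ^ m := by
    intro t ht bad hb
    have h := tail18 m t _ bad hb
    have a1 : 2 * s ^ 2 / m = Real.log (2 / δ) + Real.log (2 / δ) := by
      rw [hs2]; field_simp; ring
    have a2 : ((m / 2 : ℕ) : ℝ) * (t ^ 2 / 2) = Real.log (2 / δ) := by
      rw [ht, hm2, div_pow, mul_pow, hs2]; field_simp
    rw [a1, a2, Real.exp_add, hexp, ← mul_assoc] at h
    have h' := le_of_mul_le_mul_right h (by positivity)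
    rw [mul_div_assoc', div_le_iff₀ hδ0] at h'
    linarith
  set good := Finset.univ.filter fun X : Fin m → Bool =>
          optEnvy (hardμa m ε γ X) (hardμb m ε γ X) ≤ -Δ with hgood
  set b1 := Finset.univ.filter fun X : Fin m → Bool => s ≤ dev18 m X with hb1
  set b2 := Finset.univ.filter fun X : Fin m → Bool => s ≤ - dev18 m X with hb2
  have c1 := key (2 * s / m) rfl b1 (by
    intro X hX
    have : s ≤ dev18 m X := (Finset.mem_filter.1 hX).2
    calc 2 * s ^ 2 / m = 2 * s / m * s := by ring
      _ ≤ _ := by gcongr)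
  have c2 := key (-(2 * s / m)) (by ring) b2 (by
    intro X hX
    have : s ≤ - dev18 m X := (Finset.mem_filter.1 hX).2
    calc 2 * s ^ 2 / m = 2 * s / m * s := by ring
      _ ≤ 2 * s / m * (- dev18 m X) := by gcongr
      _ = _ := by ring)
  have hcover : (Finset.univ : Finset (Fin m → Bool)) ⊆ good ∪ (b1 ∪ b2) := by
    intro X _
    by_cases h1 : s ≤ dev18 m X
    · simp [hb1, h1]
    by_cases h2 : s ≤ - dev18 m X
    · simp [hb2, h2]
    apply Finset.mem_union_left
    rw [hgood, Finset.mem_filter]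
    refine ⟨Finset.mem_univ _, (det18 m hm ε γ hε0 hγ X).trans ?_⟩
    have habs : |dev18 m X| ≤ s := abs_le.2 ⟨by linarith, by linarith⟩
    have := mul_le_mul_of_nonneg_right habs hε0
    linarith
  have hcard := Finset.card_le_card hcover
  have hu1 := Finset.card_union_le good (b1 ∪ b2)
  have hu2 := Finset.card_union_le b1 b2
  have hN : (Finset.univ : Finset (Fin m → Bool)).card = 2 ^ m := by simp
  rw [hN] at hcard
  have hfin : (2:ℝ) ^ m ≤ good.card + (b1.card + b2.card) := by
    exact_mod_cast hcard.trans (hu1.trans (by omega))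
  rw [le_div_iff₀ (by positivity)]
  linarith
end
end

section
/- Let m be even, let ε, γ ∈ (0, 1/2] and X ∈ {0,1}^m, and consider the hard instance with parameters ε and γ and latent variables X. Let Â = (Â_a, Â_b) be any allocation, let X̂ ∈ {0,1}^m be its indicator (X̂_i = 1 if i ∈ Â_a and X̂_i = 0 if i ∈ Â_b), and define Â_ε = {i ≤ m/2 : X̂_i = 1}, B̂_ε = {i ≤ m/2 : X̂_i = 0}, S_i = 1 if i ∈ Â_a and S_i = −1 otherwise, and V_γ = ∑_{i > m/2} S_i μ^a_i. If there exists a constant K > 0 such that d_H(X_{[1:m/2]}, X̂_{[1:m/2]}) > m/4 − Kγ√m/(2ε) and |(1/2)(|Â_ε| − |B̂_ε|) + V_γ| ≥ Kγ√m, where d_H denotes Hamming distance on the first m/2 coordinates, then Envy(Â) > 0. -/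
open Real
open scoped Classical

noncomputable section

/-- for the hard instance, if for some constant `K > 0` the allocation
`Â` (given as the set `A` of items of agent a, so `X̂_i = 1 ↔ i ∈ A`) satisfies
`d_H(X_{[1:m/2]}, X̂_{[1:m/2]}) > m/4 − Kγ√m/(2ε)` and
`|(1/2)(|Â_ε| − |B̂_ε|) + V_γ| ≥ Kγ√m`, then `Envy(Â) > 0`.  Here
`Â_ε = {i < m/2 : i ∈ A}`, `B̂_ε = {i < m/2 : i ∉ A}`, `S_i = ±1` according to whether
`i ∈ A`, and `V_γ = ∑_{i ≥ m/2} S_i μ^a_i`. -/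
theorem stmt19 (m : ℕ) (hm : 2 ∣ m) (ε γ : ℝ)
    (hε : ε ∈ Set.Ioc (0 : ℝ) (1 / 2)) (hγ : γ ∈ Set.Ioc (0 : ℝ) (1 / 2))
    (X : Fin m → Bool) (A : Finset (Fin m)) (K : ℝ) (hK : 0 < K)
    (h1 : (m : ℝ) / 4 - K * γ * Real.sqrt m / (2 * ε) <
      ((Finset.univ.filter fun i : Fin m =>
          (i : ℕ) < m / 2 ∧ ¬(X i = true ↔ i ∈ A)).card : ℝ))
    (h2 : K * γ * Real.sqrt m ≤
      |(1 / 2) * (((Finset.univ.filter fun i : Fin m => (i : ℕ) < m / 2 ∧ i ∈ A).card : ℝ) -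
            ((Finset.univ.filter fun i : Fin m => (i : ℕ) < m / 2 ∧ i ∉ A).card : ℝ)) +
          ∑ i ∈ Finset.univ.filter (fun i : Fin m => m / 2 ≤ (i : ℕ)),
            (if i ∈ A then (1 : ℝ) else -1) * hardμa m ε γ X i|) :
    0 < envy (hardμa m ε γ X) (hardμb m ε γ X) A := by
  have hcard : ((m : ℝ) / 2) = ∑ i : Fin m, if (i : ℕ) < m / 2 then (1 : ℝ) else 0 := by
    obtain ⟨k, rfl⟩ := hm
    rw [Fin.sum_univ_eq_sum_range (fun i => if i < 2 * k / 2 then (1 : ℝ) else 0) (2 * k)]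
    rw [Finset.sum_ite, Finset.sum_const_zero, add_zero, Finset.sum_const]
    have : (Finset.range (2 * k)).filter (fun i => i < 2 * k / 2) = Finset.range k := by
      ext i
      simp only [Finset.mem_filter, Finset.mem_range]
      omega
    rw [this]
    simp
  have hc : ∀ (p : Fin m → Prop) [DecidablePred p], ((Finset.univ.filter p).card : ℝ) =
      ∑ i : Fin m, if p i then (1 : ℝ) else 0 := by
    intro p _
    rw [Finset.sum_boole]
  have hA : ∀ f : Fin m → ℝ, ∑ i ∈ A, f i = ∑ i, if i ∈ A then f i else 0 := by
    intro f
    rw [← Finset.sum_filter]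
    simp
  have hB : ∀ f : Fin m → ℝ, ∑ i ∈ Aᶜ, f i = ∑ i, if i ∈ A then 0 else f i := by
    intro f
    have h := Finset.sum_add_sum_compl A f
    rw [hA] at h
    have h' : (∑ i, if i ∈ A then f i else 0) + (∑ i, if i ∈ A then 0 else f i) = ∑ i, f i := by
      rw [← Finset.sum_add_distrib]
      refine Finset.sum_congr rfl fun i _ => ?_
      split_ifs <;> simp
    linarith
  set W := (1 / 2) * (((Finset.univ.filter fun i : Fin m => (i : ℕ) < m / 2 ∧ i ∈ A).card : ℝ) -
            ((Finset.univ.filter fun i : Fin m => (i : ℕ) < m / 2 ∧ i ∉ A).card : ℝ)) +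
          ∑ i ∈ Finset.univ.filter (fun i : Fin m => m / 2 ≤ (i : ℕ)),
            (if i ∈ A then (1 : ℝ) else -1) * hardμa m ε γ X i with hW
  set d := ((Finset.univ.filter fun i : Fin m =>
          (i : ℕ) < m / 2 ∧ ¬(X i = true ↔ i ∈ A)).card : ℝ) with hd
  have e1 : envyAB (hardμa m ε γ X) A = -W - ε * ((m : ℝ) / 2 - 2 * d) := by
    rw [hcard, hW, hd, envyAB, hA, hB, hc, hc, hc, Finset.sum_filter]
    simp only [Finset.mul_sum, ← Finset.sum_add_distrib, ← Finset.sum_sub_distrib,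
      ← Finset.sum_neg_distrib]
    refine Finset.sum_congr rfl fun i _ => ?_
    by_cases hi : (i : ℕ) < m / 2 <;> by_cases hx : X i = true <;> by_cases ha : i ∈ A <;>
      simp [hardμa, hi, hx, ha, not_le.mpr, not_lt.mp] <;> (try ring) <;>
      (try (intro; omega)) <;> (try omega)
  have e2 : envyBA (hardμb m ε γ X) A = W - ε * ((m : ℝ) / 2 - 2 * d) := by
    rw [hcard, hW, hd, envyBA, hA, hB, hc, hc, hc, Finset.sum_filter]
    simp only [Finset.mul_sum, ← Finset.sum_add_distrib, ← Finset.sum_sub_distrib,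
      ← Finset.sum_neg_distrib]
    refine Finset.sum_congr rfl fun i _ => ?_
    by_cases hi : (i : ℕ) < m / 2 <;> by_cases hx : X i = true <;> by_cases ha : i ∈ A <;>
      simp [hardμa, hardμb, hi, hx, ha, not_le.mpr, not_lt.mp] <;> (try ring) <;>
      (try (intro; omega)) <;> (try omega)
  have hE : ε * ((m : ℝ) / 2 - 2 * d) < K * γ * Real.sqrt m := by
    have h3 : (m : ℝ) / 4 - d < K * γ * Real.sqrt m / (2 * ε) := by linarith
    rw [lt_div_iff₀ (by linarith [hε.1])] at h3
    linarith
  rw [envy, e1, e2, lt_max_iff]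
  rcases le_abs.mp h2 with h | h
  · right; linarith
  · left; linarith
end
end
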